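/- Let α ∈ (0,1), T > 0, γ > 0, δ > 0. Let {λ_j} be positive reals, m_j := E_{α,1}(-λ_j T^α), and for t ∈ [0,T] let w_j(t) := E_{α,1}(-λ_j t^α). If g, g^δ ∈ ℓ² with ‖g − g^δ‖ ≤ δ, then for every t ∈ (0,T], ‖(w_j(t)/(γ + m_j)) (g_j − g^δ_j)‖_{ℓ²} ≤ c δ min(γ^{-1}, t^{-α}), with c depending only on α, T. -/

import Mathlib

/-- The one-parameter Mittag-Leffler function `E_{α,1}(z) = ∑_{k=0}^∞ z^k / Γ(kα+1)`. -/
noncomputable def mittagLeffler (α z : ℝ) : ℝ :=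
  ∑' k : ℕ, z ^ k / Real.Gamma (k * α + 1)

open MeasureTheory Set

lemma gamma_lower {M x : ℝ} (hM : 0 < M) (hx : 0 < x) :
    Real.exp (-(M+1)) * M ^ x / (M+1) ≤ Real.Gamma x := by
  rw [Real.Gamma_eq_integral hx]
  have hint := Real.GammaIntegral_convergent hx
  calc Real.exp (-(M+1)) * M ^ x / (M+1) 
      = ∫ s in Ioc M (M+1), Real.exp (-(M+1)) * M ^ x / (M+1) := by simp
    _ ≤ ∫ s in Ioc M (M+1), Real.exp (-s) * s ^ (x-1) := by
        apply setIntegral_mono_on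
        · simp
        · exact hint.mono_set (fun s hs => hM.trans hs.1)
        · exact measurableSet_Ioc
        · intro s hs
          have hs0 : 0 < s := hM.trans hs.1
          rw [Real.rpow_sub_one hs0.ne', mul_div_assoc]
          have := hs.1.le
          have := hs.2
          gcongr
    _ ≤ _ := by
        apply setIntegral_mono_set hint
        · filter_upwards [ae_restrict_mem measurableSet_Ioi] with s hs
          have : 0 < s := hs
          simp only [Pi.zero_apply]; positivity
        · exact (show Ioc M (M+1) ⊆ Ioi 0 from fun s hs => hM.trans hs.1).eventuallyLE

noncomputable def mlP (α β z : ℝ) : ℝ := ∑' k : ℕ, (-z) ^ k / Real.Gamma (k * α + β)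

lemma ml_summable_abs {α β R : ℝ} (hα : 0 < α) (hβ : 0 < β) (hR : 0 ≤ R) :
    Summable (fun k : ℕ => R ^ k / Real.Gamma (k * α + β)) := by
  set M : ℝ := (R + 1) ^ (1/α) with hMdef
  have hM : 0 < M := by positivity
  have hMα : M ^ α = R + 1 := by
    rw [hMdef, ← Real.rpow_mul (by positivity)]; field_simp; simp
  have hg : Summable (fun k : ℕ => ((M+1) * Real.exp (M+1) / M ^ β) * (R / (R+1)) ^ k) := by
    apply Summable.mul_left
    apply summable_geometric_of_lt_one (by positivity)
    rw [div_lt_one (by positivity)]; linarith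
  refine Summable.of_nonneg_of_le (fun k => ?_) (fun k => ?_) hg
  · have : 0 < Real.Gamma (k * α + β) := Real.Gamma_pos_of_pos (by positivity)
    positivity
  · have h := gamma_lower hM (x := k * α + β) (by positivity)
    rw [Real.rpow_add hM, mul_comm (k:ℝ) α, Real.rpow_mul hM.le, hMα, Real.rpow_natCast, mul_comm α] at h
    have hp : 0 < Real.exp (-(M+1)) * ((R+1)^k * M ^ β) / (M+1) := by positivity
    calc R ^ k / Real.Gamma (k * α + β) ≤ R ^ k / (Real.exp (-(M+1)) * ((R+1)^k * M ^ β) / (M+1)) := by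
          gcongr
      _ = _ := by rw [Real.exp_neg, div_pow]; field_simp

lemma ml_summable {α β : ℝ} (hα : 0 < α) (hβ : 0 < β) (z : ℝ) :
    Summable (fun k : ℕ => (-z) ^ k / Real.Gamma (k * α + β)) := by
  apply Summable.of_norm
  convert ml_summable_abs hα hβ (abs_nonneg z) using 2 with k
  have : 0 < Real.Gamma (k * α + β) := Real.Gamma_pos_of_pos (by positivity)
  rw [norm_div, norm_pow, norm_neg, Real.norm_eq_abs, Real.norm_eq_abs, abs_of_pos this]

lemma mlP_continuous {α β : ℝ} (hα : 0 < α) (hβ : 0 < β) : Continuous (mlP α β) := by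
  rw [continuous_iff_continuousAt]
  intro z
  have : ContinuousOn (mlP α β) (Icc (-(|z|+1)) (|z|+1)) := by
    apply continuousOn_tsum (u := fun k : ℕ => (|z|+1) ^ k / Real.Gamma (k * α + β))
    · intro k; fun_prop
    · exact ml_summable_abs hα hβ (by positivity)
    · intro k x hx
      have h0 : 0 < Real.Gamma (k * α + β) := Real.Gamma_pos_of_pos (by positivity)
      rw [norm_div, norm_pow, norm_neg, Real.norm_eq_abs, Real.norm_eq_abs, abs_of_pos h0]
      have := abs_le.2 hx
      gcongr
  apply this.continuousAt
  apply Icc_mem_nhds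
  · linarith [neg_abs_le z]
  · linarith [le_abs_self z]

/-- recurrence -/
lemma mlP_shift {α β : ℝ} (hα : 0 < α) (hβ : 0 < β) (z : ℝ) :
    mlP α β z = 1 / Real.Gamma β - z * mlP α (β + α) z := by
  unfold mlP
  rw [(ml_summable hα hβ z).tsum_eq_zero_add, ← tsum_mul_left, sub_eq_add_neg, ← tsum_neg]
  congr 1
  · simp
  · congr 1; ext k
    rw [pow_succ]; push_cast
    rw [show ((k:ℝ)+1) * α + β = k * α + (β + α) by ring]; ring

lemma beta_scaled {b m t : ℝ} (hb : 0 < b) (hm : 0 < m) (ht : 0 < t) :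
    IntegrableOn (fun s : ℝ => (t - s) ^ (m-1) * s ^ (b-1)) (Ioc 0 t) ∧
    ∫ s in Ioc 0 t, (t - s) ^ (m-1) * s ^ (b-1) 
      = t ^ (b + m - 1) * (Real.Gamma b * Real.Gamma m / Real.Gamma (b + m)) := by
  have hval := Complex.betaIntegral_scaled b m ht
  rw [Complex.betaIntegral_eq_Gamma_mul_div _ _ (by simpa) (by simpa), 
    intervalIntegral.integral_of_le ht.le] at hval
  have hEq : ∀ s ∈ Ioc 0 t, (s:ℂ) ^ ((b:ℂ)-1) * ((t:ℂ) - s) ^ ((m:ℂ)-1) 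
      = (((t - s) ^ (m-1) * s ^ (b-1) : ℝ) : ℂ) := by
    intro s hs
    have h2 : 0 ≤ t - s := sub_nonneg.2 hs.2
    rw [Complex.ofReal_mul, Complex.ofReal_cpow h2, Complex.ofReal_cpow hs.1.le]
    push_cast; ring
  rw [setIntegral_congr_fun measurableSet_Ioc hEq, integral_complex_ofReal] at hval
  have hv2 : ∫ s in Ioc 0 t, (t - s) ^ (m-1) * s ^ (b-1) 
      = t ^ (b + m - 1) * (Real.Gamma b * Real.Gamma m / Real.Gamma (b + m)) := by
    rw [show ((b:ℂ) + m - 1) = ((b + m - 1 : ℝ) : ℂ) by push_cast; ring, 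
      ← Complex.ofReal_add, Complex.Gamma_ofReal, Complex.Gamma_ofReal, Complex.Gamma_ofReal,
      ← Complex.ofReal_cpow ht.le] at hval
    exact_mod_cast hval
  refine ⟨?_, hv2⟩
  by_contra h
  rw [integral_undef h] at hv2
  have h1 := Real.Gamma_pos_of_pos hb
  have h2 := Real.Gamma_pos_of_pos hm
  have h3 := Real.Gamma_pos_of_pos (add_pos hb hm)
  have : 0 < t ^ (b + m - 1) * (Real.Gamma b * Real.Gamma m / Real.Gamma (b + m)) := by positivity
  linarith

lemma conv_integrable {α β m t : ℝ} (hα : 0 < α) (hβ : 0 < β) (hm : 0 < m) (ht : 0 < t) :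
    IntegrableOn (fun s : ℝ => (t - s) ^ (m-1) * (s ^ (β-1) * mlP α β (s ^ α))) (Ioc 0 t) := by
  have hc : Continuous (fun s : ℝ => mlP α β (s ^ α)) :=
    (mlP_continuous hα hβ).comp (Real.continuous_rpow_const hα.le)
  obtain ⟨C, hC⟩ := isCompact_Icc.exists_bound_of_continuousOn (s := Icc 0 t) hc.continuousOn
  have := (beta_scaled hβ hm ht).1.mul_bdd (c := C) hc.aestronglyMeasurable.restrict (by
    filter_upwards [ae_restrict_mem measurableSet_Ioc] with s hs
    exact hC s ⟨hs.1.le, hs.2⟩)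
  exact this.congr (by filter_upwards with s; ring)

lemma conv_eq {α β m t : ℝ} (hα : 0 < α) (hβ : 0 < β) (hm : 0 < m) (ht : 0 < t) :
    ∫ s in Ioc 0 t, (t - s) ^ (m-1) * (s ^ (β-1) * mlP α β (s ^ α)) 
      = Real.Gamma m * (t ^ (β + m - 1) * mlP α (β + m) (t ^ α)) := by
  have hb : ∀ k : ℕ, 0 < k * α + β := fun k => by positivity
  let f : ℕ → ℝ → ℝ := fun k s => ((-1)^k / Real.Gamma (k * α + β)) * ((t - s) ^ (m-1) * s ^ (k * α + β - 1))
  have hGm := Real.Gamma_pos_of_pos hm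
  have hint : ∀ k, Integrable (f k) (volume.restrict (Ioc 0 t)) := fun k =>
    (beta_scaled (hb k) hm ht).1.const_mul _
  have hpow : ∀ (k : ℕ) (c : ℝ) (s : ℝ), 0 < s → s ^ (k * α + c) = (s ^ α) ^ k * s ^ c := by
    intro k c s hs
    rw [Real.rpow_add hs, mul_comm (k:ℝ), Real.rpow_mul hs.le, Real.rpow_natCast]
  have hI : ∀ k, ∫ s in Ioc 0 t, f k s 
      = (Real.Gamma m * t ^ (β + m - 1)) * ((-(t ^ α)) ^ k / Real.Gamma (k * α + (β + m))) := by
    intro k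
    have h1 := Real.Gamma_pos_of_pos (hb k)
    simp only [f]
    rw [integral_const_mul, (beta_scaled (hb k) hm ht).2, 
      show (k:ℝ) * α + β + m - 1 = k * α + (β + m - 1) by ring, hpow k _ t ht, 
      show (k:ℝ) * α + β + m = k * α + (β + m) by ring, neg_pow (t ^ α)]
    field_simp
  have hN : ∀ k, ∫ s in Ioc 0 t, ‖f k s‖ 
      = (Real.Gamma m * t ^ (β + m - 1)) * ((t ^ α) ^ k / Real.Gamma (k * α + (β + m))) := by
    intro k
    have h1 := Real.Gamma_pos_of_pos (hb k)
    have : ∀ s ∈ Ioc 0 t, ‖f k s‖ = (1 / Real.Gamma (k * α + β)) * ((t - s) ^ (m-1) * s ^ (k * α + β - 1)) := by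
      intro s hs
      have h2 : 0 ≤ t - s := sub_nonneg.2 hs.2
      have h3 := hs.1
      simp only [f]
      rw [norm_mul, norm_div, norm_pow, norm_neg, norm_one, one_pow, Real.norm_of_nonneg h1.le,
        Real.norm_of_nonneg (by positivity)]
    rw [setIntegral_congr_fun measurableSet_Ioc this, 
      integral_const_mul, (beta_scaled (hb k) hm ht).2, 
      show (k:ℝ) * α + β + m - 1 = k * α + (β + m - 1) by ring, hpow k _ t ht, 
      show (k:ℝ) * α + β + m = k * α + (β + m) by ring]
    field_simp
  have hs : Summable (fun k => ∫ s in Ioc 0 t, ‖f k s‖) := by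
    simp_rw [hN]
    exact (ml_summable_abs hα (by positivity) (by positivity)).mul_left _
  have key := hasSum_integral_of_summable_integral_norm hint hs
  have e := key.tsum_eq
  simp_rw [hI] at e
  rw [tsum_mul_left] at e
  rw [← mul_assoc]
  refine Eq.trans ?_ e.symm
  apply setIntegral_congr_fun measurableSet_Ioc
  intro s hs
  simp only [f, mlP]
  rw [← tsum_mul_left, ← tsum_mul_left]
  congr 1; ext k
  rw [show (k:ℝ) * α + β - 1 = k * α + (β - 1) by ring, hpow k _ s hs.1, neg_pow (s ^ α)]
  ring

lemma int_kernel {m a t : ℝ} (hm : 0 < m) (hat : a ≤ t) :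
    IntegrableOn (fun s : ℝ => (t - s) ^ (m-1)) (Ioc a t) ∧
    ∫ s in Ioc a t, (t - s) ^ (m-1) = (t - a) ^ m / m := by
  constructor
  · have h := (intervalIntegral.intervalIntegrable_rpow' (a := 0) (b := t - a) 
      (show -1 < m - 1 by linarith)).comp_sub_left t
    simp only [sub_zero, sub_sub_cancel] at h
    exact (intervalIntegrable_iff_integrableOn_Ioc_of_le hat).1 h.symm
  · rw [← intervalIntegral.integral_of_le hat, 
      intervalIntegral.integral_comp_sub_left (fun x => x ^ (m-1)) t, 
      integral_rpow (Or.inl (by linarith))]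
    simp [hm.ne']

lemma mlP_pos {α : ℝ} (hα : 0 < α) (hα1 : α < 1) {τ : ℝ} (hτ : 0 ≤ τ) : 0 < mlP α α (τ ^ α) := by
  by_contra hneg
  have hG := Real.Gamma_pos_of_pos hα
  have hc : Continuous (fun s : ℝ => mlP α α (s ^ α)) :=
    (mlP_continuous hα hα).comp (Real.continuous_rpow_const hα.le)
  set V : ℝ → ℝ := fun s => mlP α α (s ^ α) with hV
  set S : Set ℝ := Icc 0 τ ∩ {x | V x ≤ 0} with hS
  have hSc : IsCompact S := isCompact_Icc.inter_right (isClosed_le hc continuous_const)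
  have hSn : S.Nonempty := ⟨τ, ⟨hτ, le_rfl⟩, not_lt.1 hneg⟩
  obtain ⟨t0, ht0S, ht0min⟩ := hSc.exists_isLeast hSn
  have hV0 : 0 < V 0 := by
    simp only [hV, Real.zero_rpow hα.ne']
    rw [mlP_shift hα hα]; simp; exact hG
  have ht0 : 0 < t0 := by
    rcases ht0S.1.1.lt_or_eq with h | h
    · exact h
    · exfalso; have := ht0S.2; rw [← h] at this; exact absurd hV0 (not_lt.2 this)
  have hVpos : ∀ s, 0 ≤ s → s < t0 → 0 < V s := by
    intro s hs hst
    by_contra h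
    exact absurd (ht0min ⟨⟨hs, hst.le.trans ht0S.1.2⟩, not_lt.1 h⟩) (not_le.2 hst)
  set v : ℝ → ℝ := fun s => s ^ (α - 1) * V s with hv
  have hvpos : ∀ s, 0 < s → s < t0 → 0 < v s := fun s hs hst =>
    mul_pos (Real.rpow_pos_of_pos hs _) (hVpos s hs.le hst)
  have hvt0 : v t0 ≤ 0 := mul_nonpos_of_nonneg_of_nonpos (by positivity) ht0S.2
  -- Volterra equation
  have hvol : ∀ t, 0 < t → ∫ s in Ioc 0 t, (t - s) ^ (α-1) * v s = t ^ (α-1) - Real.Gamma α * v t := by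
    intro t ht
    rw [conv_eq hα hα hα ht]
    simp only [hv, hV]
    rw [mlP_shift hα hα (t ^ α), show α + α - 1 = (α - 1) + α by ring, Real.rpow_add ht]
    field_simp
    ring
  set ε : ℝ := min (t0/2) ((α * Real.Gamma α / 4) ^ (1/α)) with hε
  have hε0 : 0 < ε := lt_min (by positivity) (by positivity)
  have hε1 : ε ≤ t0 / 2 := min_le_left _ _
  have hε2 : ε ^ α ≤ α * Real.Gamma α / 4 := by
    calc ε ^ α ≤ ((α * Real.Gamma α / 4) ^ (1/α)) ^ α := 
          Real.rpow_le_rpow hε0.le (min_le_right _ _) hα.le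
      _ = _ := by rw [← Real.rpow_mul (by positivity), one_div_mul_cancel hα.ne', Real.rpow_one]
  have hvc : ContinuousOn v (Icc (t0 - ε) t0) := by
    apply ContinuousOn.mul _ hc.continuousOn
    intro x hx
    apply ContinuousAt.continuousWithinAt
    apply Real.continuousAt_rpow_const
    left; linarith [hx.1]
  obtain ⟨t1, ht1, hmax⟩ := isCompact_Icc.exists_isMaxOn ⟨t0, by constructor <;> linarith⟩ hvc
  have hM : 0 < v t1 := by
    refine lt_of_lt_of_le (hvpos (t0 - ε) (by linarith) (by linarith)) (hmax ⟨le_rfl, by linarith⟩)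
  have ht1lt : t1 < t0 := by
    rcases ht1.2.lt_or_eq with h | h
    · exact h
    · rw [h] at hM; linarith
  have ht1pos : 0 < t1 := by linarith [ht1.1]
  set r : ℝ := (t1/t0) ^ (1-α) with hr
  have hr2 : 1/2 ≤ r := by
    have h1 : 1/2 ≤ t1/t0 := by rw [le_div_iff₀ ht0]; linarith [ht1.1]
    have h2 : t1/t0 ≤ 1 := by rw [div_le_one ht0]; exact ht1lt.le
    calc 1/2 ≤ t1/t0 := h1
      _ = (t1/t0) ^ (1:ℝ) := by simp
      _ ≤ r := Real.rpow_le_rpow_of_exponent_ge (by positivity) h2 (by linarith)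
  have hrk : r * t1 ^ (α-1) = t0 ^ (α-1) := by
    rw [hr, Real.div_rpow ht1pos.le ht0.le, show α - 1 = -(1-α) by ring, Real.rpow_neg ht1pos.le, 
      Real.rpow_neg ht0.le]
    field_simp
  have hi0 := conv_integrable hα hα hα ht0
  have hi1 := conv_integrable hα hα hα ht1pos
  have hsplit : ∫ s in Ioc 0 t0, (t0 - s) ^ (α-1) * v s 
      = (∫ s in Ioc 0 t1, (t0 - s) ^ (α-1) * v s) + ∫ s in Ioc t1 t0, (t0 - s) ^ (α-1) * v s := by
    rw [← Ioc_union_Ioc_eq_Ioc ht1pos.le ht1lt.le]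
    apply setIntegral_union (Ioc_disjoint_Ioc_of_le le_rfl) measurableSet_Ioc
    · exact hi0.mono_set (Ioc_subset_Ioc_right ht1lt.le)
    · exact hi0.mono_set (Ioc_subset_Ioc_left ht1pos.le)
  have hA : ∫ s in Ioc 0 t1, (t0 - s) ^ (α-1) * v s ≤ r * ∫ s in Ioc 0 t1, (t1 - s) ^ (α-1) * v s := by
    rw [← integral_const_mul, integral_Ioc_eq_integral_Ioo, integral_Ioc_eq_integral_Ioo]
    apply setIntegral_mono_on
    · exact hi0.mono_set (fun s hs => ⟨hs.1, hs.2.le.trans ht1lt.le⟩)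
    · exact (hi1.mono_set Ioo_subset_Ioc_self).const_mul r
    · exact measurableSet_Ioo
    · intro s hs
      rw [← mul_assoc r]
      apply mul_le_mul_of_nonneg_right _ (hvpos s hs.1 (hs.2.trans ht1lt)).le
      have p1 : 0 < t1 - s := sub_pos.2 hs.2
      have p0 : 0 < t0 - s := by linarith
      have : (t1 - s) / (t0 - s) ≤ t1 / t0 := by
        rw [div_le_div_iff₀ p0 ht0]; nlinarith [hs.1]
      have h2 : ((t1 - s) / (t0 - s)) ^ (1-α) ≤ r :=
        Real.rpow_le_rpow (by positivity) this (by linarith)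
      calc (t0 - s) ^ (α-1) = ((t1 - s) / (t0 - s)) ^ (1-α) * (t1 - s) ^ (α-1) := by
            rw [Real.div_rpow p1.le p0.le, show α - 1 = -(1-α) by ring, Real.rpow_neg p1.le, 
              Real.rpow_neg p0.le]
            field_simp
        _ ≤ _ := by gcongr
  have hB : ∫ s in Ioc t1 t0, (t0 - s) ^ (α-1) * v s ≤ (t0 - t1) ^ α / α * v t1 := by
    rw [← (int_kernel hα ht1lt.le).2, ← integral_mul_const]
    apply setIntegral_mono_on
    · exact hi0.mono_set (Ioc_subset_Ioc_left ht1pos.le)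
    · exact (int_kernel hα ht1lt.le).1.mul_const _
    · exact measurableSet_Ioc
    · intro s hs
      have h1 : v s ≤ v t1 := hmax ⟨ht1.1.trans hs.1.le, hs.2⟩
      have h2 : 0 ≤ t0 - s := sub_nonneg.2 hs.2
      gcongr
  have hBε : (t0 - t1) ^ α / α ≤ Real.Gamma α / 4 := by
    rw [div_le_iff₀ hα]
    calc (t0 - t1) ^ α ≤ ε ^ α := Real.rpow_le_rpow (by linarith) (by linarith [ht1.1]) hα.le
      _ ≤ _ := by linarith
  have e0 := hvol t0 ht0
  rw [hvol t1 ht1pos, mul_sub, hrk] at hA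
  have h5 : (t0 - t1) ^ α / α * v t1 ≤ Real.Gamma α / 4 * v t1 := by gcongr
  have h6 : 1/2 * (Real.Gamma α * v t1) ≤ r * (Real.Gamma α * v t1) := by gcongr
  have h7 : Real.Gamma α * v t0 ≤ 0 := mul_nonpos_of_nonneg_of_nonpos hG.le hvt0
  have h8 : 0 < Real.Gamma α * v t1 := by positivity
  linarith

lemma ml_bounds {α : ℝ} (hα : 0 < α) (hα1 : α < 1) {z : ℝ} (hz : 0 < z) :
    0 < mlP α 1 z ∧ mlP α 1 z ≤ 1 ∧ mlP α 1 z * z ≤ α * Real.Gamma α ∧ 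
      1 ≤ mlP α 1 z * (1 + Real.Gamma (1-α) * z) := by
  have hG := Real.Gamma_pos_of_pos hα
  have h1α : 0 < 1 - α := by linarith
  have hG1 := Real.Gamma_pos_of_pos h1α
  have hvnn : ∀ s, 0 < s → 0 ≤ s ^ (α-1) * mlP α α (s ^ α) := fun s hs =>
    mul_nonneg (Real.rpow_nonneg hs.le _) (mlP_pos hα hα1 hs.le).le
  have hvint : ∀ t, 0 < t → IntegrableOn (fun s : ℝ => s ^ (α-1) * mlP α α (s ^ α)) (Ioc 0 t) := by
    intro t ht
    simpa using conv_integrable hα hα one_pos ht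
  have e2 : ∀ t, 0 < t → ∫ s in Ioc 0 t, s ^ (α-1) * mlP α α (s ^ α) = 1 - mlP α 1 (t ^ α) := by
    intro t ht
    have := conv_eq hα hα one_pos ht
    simp only [sub_self, Real.rpow_zero, one_mul, Real.Gamma_one, add_sub_cancel_right] at this
    rw [this, mlP_shift hα one_pos (t ^ α), add_comm α 1]; simp
  have e1 : ∀ t, 0 < t → ∫ s in Ioc 0 t, (t - s) ^ (1 - α - 1) * (s ^ (α-1) * mlP α α (s ^ α)) 
      = Real.Gamma (1-α) * mlP α 1 (t ^ α) := by
    intro t ht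
    rw [conv_eq hα hα h1α ht]; simp
  have e3 : ∀ t, 0 < t → ∫ s in Ioc 0 t, (t - s) ^ (α - 1) * mlP α 1 (s ^ α)
      = Real.Gamma α * (1 - mlP α 1 (t ^ α)) := by
    intro t ht
    have := conv_eq hα one_pos hα ht
    simp only [sub_self, Real.rpow_zero, one_mul, add_sub_cancel_left] at this
    rw [this, mlP_shift hα one_pos (t ^ α)]; simp
  obtain ⟨t, ht, rfl⟩ : ∃ t : ℝ, 0 < t ∧ t ^ α = z := 
    ⟨z ^ (1/α), by positivity, by rw [← Real.rpow_mul hz.le]; field_simp; simp⟩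
  have hle1 : mlP α 1 (t ^ α) ≤ 1 := by
    have : 0 ≤ ∫ s in Ioc 0 t, s ^ (α-1) * mlP α α (s ^ α) :=
      setIntegral_nonneg measurableSet_Ioc (fun s hs => hvnn s hs.1)
    linarith [e2 t ht]
  have hlow : t ^ (-α) * (1 - mlP α 1 (t ^ α)) ≤ Real.Gamma (1-α) * mlP α 1 (t ^ α) := by
    rw [← e1 t ht, ← e2 t ht, ← integral_const_mul, integral_Ioc_eq_integral_Ioo, integral_Ioc_eq_integral_Ioo]
    apply setIntegral_mono_on
    · exact ((hvint t ht).mono_set Ioo_subset_Ioc_self).const_mul _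
    · exact (conv_integrable hα hα h1α ht).mono_set Ioo_subset_Ioc_self
    · exact measurableSet_Ioo
    · intro s hs
      apply mul_le_mul_of_nonneg_right _ (hvnn s hs.1)
      rw [show 1 - α - 1 = -α by ring]
      exact Real.rpow_le_rpow_of_nonpos (sub_pos.2 hs.2) (by linarith [hs.1]) (by linarith)
  have hlow2 : 1 ≤ mlP α 1 (t ^ α) * (1 + Real.Gamma (1-α) * t ^ α) := by
    rw [Real.rpow_neg ht.le, inv_mul_le_iff₀ (by positivity)] at hlow
    linarith
  have hpos : 0 < mlP α 1 (t ^ α) := by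
    by_contra h
    have : mlP α 1 (t ^ α) * (1 + Real.Gamma (1-α) * t ^ α) ≤ 0 :=
      mul_nonpos_of_nonpos_of_nonneg (not_lt.1 h) (by positivity)
    linarith
  refine ⟨hpos, hle1, ?_, hlow2⟩
  have hanti : ∀ s ∈ Ioc 0 t, mlP α 1 (t ^ α) ≤ mlP α 1 (s ^ α) := by
    intro s hs
    have : ∫ x in Ioc 0 s, x ^ (α-1) * mlP α α (x ^ α) ≤ ∫ x in Ioc 0 t, x ^ (α-1) * mlP α α (x ^ α) := by
      apply setIntegral_mono_set (hvint t ht)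
      · filter_upwards [ae_restrict_mem measurableSet_Ioc] with x hx
        exact hvnn x hx.1
      · exact (Ioc_subset_Ioc_right hs.2).eventuallyLE
    rw [e2 s hs.1, e2 t ht] at this
    linarith
  have hup : (t - 0) ^ α / α * mlP α 1 (t ^ α) ≤ Real.Gamma α * (1 - mlP α 1 (t ^ α)) := by
    rw [← e3 t ht, ← (int_kernel hα ht.le).2, ← integral_mul_const]
    apply setIntegral_mono_on
    · exact (int_kernel hα ht.le).1.mul_const _
    · simpa using conv_integrable hα one_pos hα ht
    · exact measurableSet_Ioc
    · intro s hs
      have h2 : 0 ≤ t - s := sub_nonneg.2 hs.2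
      have := hanti s hs
      gcongr
  rw [sub_zero, div_mul_eq_mul_div, div_le_iff₀ hα] at hup
  have : 0 ≤ Real.Gamma α * mlP α 1 (t ^ α) * α := by positivity
  linarith

/-- Data-propagation estimate: the difference of the regularized solutions computed with
exact data `g` and noisy data `gδ` (given via their `ℓ²` coefficient sequences against the
eigenbasis) is controlled by `δ · min(γ⁻¹, t^{-α})`. -/
theorem noisy_data_propagation (α T : ℝ) (hα : α ∈ Set.Ioo (0 : ℝ) 1) (hT : 0 < T) :
    ∃ c : ℝ, 0 < c ∧
      ∀ γ δ : ℝ, 0 < γ → 0 < δ →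
      ∀ lam : ℕ → ℝ, (∀ j, 0 < lam j) →
      ∀ g gδ : ℕ → ℝ, Summable (fun j => g j ^ 2) → Summable (fun j => gδ j ^ 2) →
        Real.sqrt (∑' j : ℕ, (g j - gδ j) ^ 2) ≤ δ →
        ∀ t : ℝ, t ∈ Set.Ioc (0 : ℝ) T →
          Real.sqrt (∑' j : ℕ,
              (mittagLeffler α (-(lam j * t ^ α)) /
                (γ + mittagLeffler α (-(lam j * T ^ α))) * (g j - gδ j)) ^ 2)
            ≤ c * δ * min γ⁻¹ (t ^ (-α)) := by
  obtain ⟨hα0, hα1⟩ := hα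
  have hG := Real.Gamma_pos_of_pos hα0
  have hG1 := Real.Gamma_pos_of_pos (show 0 < 1 - α by linarith)
  have hTα : 0 < T ^ α := Real.rpow_pos_of_pos hT α
  refine ⟨1 + T ^ α + α * Real.Gamma α * Real.Gamma (1-α) * T ^ α, by positivity, ?_⟩
  intro γ δ hγ hδ lam hlam g gδ hg hgδ hgd t ht
  set c : ℝ := 1 + T ^ α + α * Real.Gamma α * Real.Gamma (1-α) * T ^ α with hc
  have hX : 0 ≤ α * Real.Gamma α * Real.Gamma (1-α) * T ^ α := by positivity
  have ht0 : 0 < t := ht.1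
  have htα : 0 < t ^ α := Real.rpow_pos_of_pos ht0 α
  have hmin : 0 < min γ⁻¹ (t ^ (-α)) := lt_min (by positivity) (by positivity)
  have hd : Summable (fun j => (g j - gδ j) ^ 2) := by
    refine Summable.of_nonneg_of_le (fun j => sq_nonneg _) (fun j => ?_)
      ((hg.mul_left 2).add (hgδ.mul_left 2))
    nlinarith [sq_nonneg (g j + gδ j)]
  have hcoef : ∀ j, |mittagLeffler α (-(lam j * t ^ α)) /
      (γ + mittagLeffler α (-(lam j * T ^ α)))| ≤ c * min γ⁻¹ (t ^ (-α)) := by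
    intro j
    have hl := hlam j
    obtain ⟨a1, a2, a3, -⟩ := ml_bounds hα0 hα1 (z := lam j * t ^ α) (by positivity)
    obtain ⟨b1, -, -, b4⟩ := ml_bounds hα0 hα1 (z := lam j * T ^ α) (by positivity)
    change |mlP α 1 (lam j * t ^ α) / (γ + mlP α 1 (lam j * T ^ α))| ≤ _
    set w := mlP α 1 (lam j * t ^ α)
    set m := mlP α 1 (lam j * T ^ α)
    rw [abs_of_pos (by positivity), mul_min_of_nonneg _ _ (by positivity)]
    apply le_min
    · rw [div_le_iff₀ (by positivity)]
      have h1 : 1 ≤ γ⁻¹ * (γ + m) := by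
        rw [mul_add, inv_mul_cancel₀ hγ.ne']
        have : 0 < γ⁻¹ * m := by positivity
        linarith
      have h2 : 1 ≤ c := by linarith
      calc w ≤ 1 := a2
        _ ≤ c * (γ⁻¹ * (γ + m)) := one_le_mul_of_one_le_of_one_le h2 h1
        _ = _ := by ring
    · have hle : t ^ α ≤ T ^ α := Real.rpow_le_rpow ht0.le ht.2 hα0.le
      rw [div_le_iff₀ (by positivity), Real.rpow_neg ht0.le]
      have k1 : w * t ^ α ≤ T ^ α := by nlinarith
      have k2 : w * t ^ α * (Real.Gamma (1-α) * (lam j * T ^ α))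
          ≤ α * Real.Gamma α * (Real.Gamma (1-α) * T ^ α) := by
        have := mul_le_mul_of_nonneg_right a3
          (show 0 ≤ Real.Gamma (1-α) * T ^ α by positivity)
        linarith
      have k3 : w * t ^ α * (1 + Real.Gamma (1-α) * (lam j * T ^ α)) ≤ c := by linarith
      have k4 : w * t ^ α ≤ c * m := by
        calc w * t ^ α ≤ w * t ^ α * (m * (1 + Real.Gamma (1-α) * (lam j * T ^ α))) :=
              le_mul_of_one_le_right (by positivity) b4
          _ = (w * t ^ α * (1 + Real.Gamma (1-α) * (lam j * T ^ α))) * m := by ring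
          _ ≤ c * m := by gcongr
      have k5 : w * t ^ α ≤ c * (γ + m) := by
        have : 0 ≤ c * γ := by positivity
        linarith
      calc w = w * t ^ α * (t ^ α)⁻¹ := by field_simp
        _ ≤ c * (γ + m) * (t ^ α)⁻¹ := by gcongr
        _ = _ := by ring
  set K := c * min γ⁻¹ (t ^ (-α)) with hK
  have hK0 : 0 ≤ K := by positivity
  have hterm : ∀ j, (mittagLeffler α (-(lam j * t ^ α)) /
      (γ + mittagLeffler α (-(lam j * T ^ α))) * (g j - gδ j)) ^ 2 ≤ K ^ 2 * (g j - gδ j) ^ 2 := by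
    intro j
    rw [mul_pow, ← sq_abs (_ / _)]
    have := hcoef j
    gcongr
  have hsum := hd.mul_left (K ^ 2)
  calc _ ≤ Real.sqrt (∑' j, K ^ 2 * (g j - gδ j) ^ 2) := by
        apply Real.sqrt_le_sqrt
        exact Summable.tsum_le_tsum hterm
          (Summable.of_nonneg_of_le (fun j => sq_nonneg _) hterm hsum) hsum
    _ = K * Real.sqrt (∑' j, (g j - gδ j) ^ 2) := by
        rw [tsum_mul_left, Real.sqrt_mul (sq_nonneg K), Real.sqrt_sq hK0]
    _ ≤ K * δ := by gcongr
    _ = _ := by rw [hK]; ring
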